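/- arXiv:math/0606615 — 5 statements merged into one kernel-verified Lean document; each statement's English description precedes it below -/
import Mathlib

section
/- Let m ≥ 1, let μ be a finite Borel measure on ℝ, and let f : ℝ^m → ℝ be bounded and Borel measurable. Define F_{m,f}(ν) = ⟨f, ν^m⟩ for finite Borel measures ν on ℝ. Then for every x ∈ ℝ the limit lim_{r→0+} (1/r)[F_{m,f}(μ + r δ_x) − F_{m,f}(μ)] exists and equals Σ_{i=1}^m ⟨Ψ_i(x)f, μ^{m−1}⟩. -/
open MeasureTheory Filter Topology

open scoped NNReal

/-! The product measure is additive and homogeneous in each factor. Expanding `⨂ᵢ (μᵢ + r νᵢ)` over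
the sets `S` of coordinates at which `r νᵢ` is chosen makes `r ↦ ∫ f d⨂ᵢ (μᵢ + r νᵢ)` a polynomial
on `r ≥ 0`, whose linear coefficient is the sum over singletons `S = {i}`. For `νᵢ = δ_x` the term
at `{i}` is the integral of `f` with `x` inserted as its `i`-th variable. -/

theorem hasDerivAt_sum_pow_card_smul {ι 𝕜 E : Type*} [Fintype ι] [NontriviallyNormedField 𝕜]
    [NormedAddCommGroup E] [NormedSpace 𝕜 E] (a : Finset ι → E) :
    HasDerivAt (fun r : 𝕜 => ∑ S, r ^ S.card • a S) (∑ i, a {i}) 0 := by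
  classical
  have deriv_term (S : Finset ι) : HasDerivAt (fun r : 𝕜 => r ^ S.card • a S)
      (if S.card = 1 then a S else 0) 0 := by
    convert! (hasDerivAt_pow S.card (0 : 𝕜)).smul_const (a S) using 1
    rcases S.card with _ | _ | k <;> simp
  convert! HasDerivAt.fun_sum fun S (_ : S ∈ Finset.univ) => deriv_term S using 1
  have singletons :
      Finset.univ.filter (fun S : Finset ι => S.card = 1) = Finset.univ.image singleton := by
    ext S
    simp [Finset.card_eq_one, eq_comm]
  rw [← Finset.sum_filter, singletons, Finset.sum_image Finset.singleton_injective.injOn]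

section ProductExpansion

variable {ι : Type*} [DecidableEq ι] {X : ι → Type*} [∀ i, MeasurableSpace (X i)]
  (μ ν : ∀ i, Measure (X i)) [∀ i, SigmaFinite (μ i)] [∀ i, SigmaFinite (ν i)]

instance sigmaFinite_piecewise (S : Finset ι) (i : ι) : SigmaFinite (S.piecewise ν μ i) := by
  by_cases hi : i ∈ S
  · rw [S.piecewise_eq_of_mem ν μ hi]
    infer_instance
  · rw [S.piecewise_eq_of_notMem ν μ hi]
    infer_instance

variable [Fintype ι]

theorem pi_add_smul_eq_sum_piecewise (c : ℝ≥0) :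
    Measure.pi (fun i => μ i + c • ν i) =
      ∑ S : Finset ι, c ^ S.card • Measure.pi (S.piecewise ν μ) := by
  refine Measure.pi_eq fun s _ => ?_
  have measure_box (S : Finset ι) : Measure.pi (S.piecewise ν μ) (Set.univ.pi s) =
      (∏ i ∈ S, ν i (s i)) * ∏ i ∈ Sᶜ, μ i (s i) := by
    rw [Measure.pi_pi, ← Finset.prod_mul_prod_compl S]
    congr 1 <;> refine Finset.prod_congr rfl fun i hi => ?_
    · rw [S.piecewise_eq_of_mem ν μ hi]
    · rw [S.piecewise_eq_of_notMem ν μ (Finset.mem_compl.1 hi)]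
  simp only [Measure.coe_finsetSum, Finset.sum_apply, Measure.smul_apply, measure_box,
    Measure.add_apply, add_comm (μ _ _), Fintype.prod_add, ENNReal.smul_def, smul_eq_mul,
    Finset.prod_mul_distrib, Finset.prod_const, ENNReal.coe_pow, mul_assoc]

variable {μ ν} {E : Type*} [NormedAddCommGroup E] {f : (∀ i, X i) → E}

theorem integrable_pi_piecewise (hf : Integrable f (Measure.pi fun i => μ i + ν i))
    (S : Finset ι) : Integrable f (Measure.pi (S.piecewise ν μ)) := by
  have expansion := pi_add_smul_eq_sum_piecewise μ ν 1
  simp only [one_smul, one_pow] at expansion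
  rw [expansion, integrable_finsetSum_measure] at hf
  exact hf S (Finset.mem_univ S)

variable [NormedSpace ℝ E]

theorem integral_pi_add_smul (hf : Integrable f (Measure.pi fun i => μ i + ν i)) (c : ℝ≥0) :
    ∫ z, f z ∂(Measure.pi fun i => μ i + c • ν i) =
      ∑ S : Finset ι, (c : ℝ) ^ S.card • ∫ z, f z ∂(Measure.pi (S.piecewise ν μ)) := by
  rw [pi_add_smul_eq_sum_piecewise, integral_finsetSum_measure fun S _ =>
    (integrable_pi_piecewise hf S).smul_measure_nnreal]
  simp only [integral_smul_nnreal_measure, NNReal.smul_def, NNReal.coe_pow]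

theorem hasDerivWithinAt_integral_pi_add_smul
    (hf : Integrable f (Measure.pi fun i => μ i + ν i)) :
    HasDerivWithinAt (fun r : ℝ => ∫ z, f z ∂(Measure.pi fun i => μ i + ENNReal.ofReal r • ν i))
      (∑ i, ∫ z, f z ∂(Measure.pi (Function.update μ i (ν i)))) (Set.Ici 0) 0 := by
  have polynomial {r : ℝ} (hr : 0 ≤ r) :
      ∫ z, f z ∂(Measure.pi fun i => μ i + ENNReal.ofReal r • ν i) =
        ∑ S : Finset ι, r ^ S.card • ∫ z, f z ∂(Measure.pi (S.piecewise ν μ)) := by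
    have expansion := integral_pi_add_smul hf r.toNNReal
    rwa [Real.coe_toNNReal r hr] at expansion
  simp only [← Finset.piecewise_singleton]
  exact (hasDerivAt_sum_pow_card_smul _).hasDerivWithinAt.congr
    (fun r hr => polynomial hr) (polynomial le_rfl)

end ProductExpansion

theorem measurePreserving_insertNth_dirac {n : ℕ} {X : Fin (n + 1) → Type*}
    [∀ i, MeasurableSpace (X i)] (i : Fin (n + 1)) (x : X i)
    (μ : ∀ j, Measure (X (i.succAbove j))) [∀ j, SigmaFinite (μ j)] :
    MeasurePreserving (i.insertNth x) (Measure.pi μ)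
      (Measure.pi (i.insertNth (Measure.dirac x) μ)) := by
  have sigmaFinite_insertNth (k) :
      SigmaFinite (i.insertNth (α := fun k => Measure (X k)) (Measure.dirac x) μ k) := by
    cases k using i.succAboveCases with
    | x =>
      rw [Fin.insertNth_apply_same]
      infer_instance
    | p j =>
      rw [Fin.insertNth_apply_succAbove]
      infer_instance
  have insertNth_pair :=
    (measurePreserving_piFinSuccAbove (i.insertNth (Measure.dirac x) μ) i).symm
  simp only [Fin.insertNth_apply_same, Fin.insertNth_apply_succAbove] at insertNth_pair
  have pair :
      MeasurePreserving (Prod.mk x) (Measure.pi μ) ((Measure.dirac x).prod (Measure.pi μ)) :=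
    ⟨measurable_prodMk_left, (Measure.dirac_prod x).symm⟩
  exact insertNth_pair.comp pair

theorem integral_pi_update_dirac {n : ℕ} {X : Fin (n + 1) → Type*} [∀ i, MeasurableSpace (X i)]
    {E : Type*} [NormedAddCommGroup E] [NormedSpace ℝ E] (μ : ∀ i, Measure (X i))
    (i : Fin (n + 1)) [∀ j, SigmaFinite (μ (i.succAbove j))] (x : X i) {f : (∀ i, X i) → E}
    (hf : AEStronglyMeasurable f (Measure.pi (Function.update μ i (Measure.dirac x)))) :
    ∫ z, f z ∂(Measure.pi (Function.update μ i (Measure.dirac x))) =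
      ∫ z, f (i.insertNth x z) ∂(Measure.pi fun j => μ (i.succAbove j)) := by
  have preserving := measurePreserving_insertNth_dirac i x fun j => μ (i.succAbove j)
  have update_eq : Function.update μ i (Measure.dirac x) =
      i.insertNth (Measure.dirac x) fun j => μ (i.succAbove j) :=
    (Fin.insertNth_removeNth i (Measure.dirac x) μ).symm
  rw [update_eq, ← preserving.map_eq] at hf ⊢
  exact integral_map preserving.aemeasurable hf

theorem statement0_general {n : ℕ} {X : Fin (n + 1) → Type*} [∀ i, MeasurableSpace (X i)]
    {E : Type*} [NormedAddCommGroup E] [NormedSpace ℝ E]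
    (μ : ∀ i, Measure (X i)) [∀ i, SigmaFinite (μ i)] (x : ∀ i, X i) {f : (∀ i, X i) → E}
    (hf : Integrable f (Measure.pi fun i => μ i + Measure.dirac (x i))) :
    Tendsto
      (fun r : ℝ => (1 / r) •
        ((∫ z, f z ∂(Measure.pi fun i => μ i + ENNReal.ofReal r • Measure.dirac (x i))) -
          ∫ z, f z ∂(Measure.pi μ)))
      (𝓝[>] (0 : ℝ))
      (𝓝 (∑ i : Fin (n + 1),
        ∫ z, f (i.insertNth (x i) z) ∂(Measure.pi fun j => μ (i.succAbove j)))) := by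
  have integral_update (i : Fin (n + 1)) :
      ∫ z, f z ∂(Measure.pi (Function.update μ i (Measure.dirac (x i)))) =
        ∫ z, f (i.insertNth (x i) z) ∂(Measure.pi fun j => μ (i.succAbove j)) := by
    have integrable_update := integrable_pi_piecewise hf {i}
    rw [Finset.piecewise_singleton] at integrable_update
    exact integral_pi_update_dirac μ i (x i) integrable_update.aestronglyMeasurable
  have slope_tendsto := (hasDerivWithinAt_iff_tendsto_slope' Set.self_notMem_Ioi).1
    (hasDerivWithinAt_integral_pi_add_smul hf).Ioi_of_Ici
  simpa [slope_fun_def, integral_update] using slope_tendsto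

/-- For `m = n+1 ≥ 1`, a finite Borel measure `μ` on `ℝ` and a bounded
Borel function `f : ℝ^m → ℝ`, the first variational derivative of
`F_{m,f}(ν) = ⟨f, ν^m⟩` at `μ` in direction `x` exists and equals
`∑_{i=1}^m ⟨Ψ_i(x) f, μ^{m-1}⟩`. -/
theorem statement0 (n : ℕ) (μ : Measure ℝ) [IsFiniteMeasure μ]
    (f : (Fin (n + 1) → ℝ) → ℝ) (hfm : Measurable f) (C : ℝ)
    (hfb : ∀ z, |f z| ≤ C) (x : ℝ) :
    Tendsto
      (fun r : ℝ => (1 / r) *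
        ((∫ z, f z ∂(Measure.pi fun _ : Fin (n + 1) => μ + ENNReal.ofReal r • Measure.dirac x)) -
          ∫ z, f z ∂(Measure.pi fun _ : Fin (n + 1) => μ)))
      (𝓝[>] (0 : ℝ))
      (𝓝 (∑ i : Fin (n + 1), ∫ z, f (i.insertNth x z) ∂(Measure.pi fun _ : Fin n => μ))) :=
  statement0_general (fun _ => μ) (fun _ => x)
    (Integrable.of_bound hfm.aestronglyMeasurable C (.of_forall hfb))
end

section
/- Let m ≥ 2, let μ be a finite Borel measure on ℝ, let a : ℝ → ℝ and ρ : ℝ → ℝ be bounded Borel measurable functions, and let f : ℝ^m → ℝ be twice continuously differentiable with f and all its partial derivatives up to order two bounded. Define g_μ(x) := Σ_{i=1}^m ⟨Ψ_i(x)f, μ^{m−1}⟩ for x ∈ ℝ, and h_μ(x,y) := Σ_{1≤i,j≤m, i≠j} ⟨Ψ_{i,j}(x,y)f, μ^{m−2}⟩ for x,y ∈ ℝ, where Ψ_{i,j}(x,y)f places x in the i-th and y in the j-th variable of f. Then g_μ is twice differentiable, h_μ admits the mixed second partial derivative ∂²h_μ/∂x∂y, and (1/2)∫_ℝ a(x)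 (d²/dx²)g_μ(x) μ(dx) + (1/2)∫_{ℝ²} ρ(x−y) (∂²/∂x∂y)h_μ(x,y) μ(dx)μ(dy) = ∫_{ℝ^m} [ (1/2)Σ_{i=1}^m a(x_i) f''_{ii}(x₁,…,x_m) + (1/2)Σ_{1≤i,j≤m, i≠j} ρ(x_i−x_j) f''_{ij}(x₁,…,x_m) ] μ^m(dx₁,…,dx_m), where f''_{ij} denotes the second partial derivative of f with respect to its i-th and j-th variables. -/
open MeasureTheory Filter Topology

/-- The position of index `j` among the indices of `Fin (n+2)` after removing index `i`
(meaningful when `i ≠ j`): one has `i.succAbove (auxIdx i j) = j`. -/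
def auxIdx {n : ℕ} (i j : Fin (n + 2)) : Fin (n + 1) :=
  if _h : (j : ℕ) < (i : ℕ) then ⟨(j : ℕ), by have := i.isLt; omega⟩
  else ⟨(j : ℕ) - 1, by have := j.isLt; omega⟩

/-- `Ψ_{i,j}(x,y) f : ℝ^n → ℝ` (for `f : ℝ^{n+2} → ℝ`, `i ≠ j`): place `x` in the `i`-th
variable of `f`, `y` in the `j`-th variable of `f`, and the `n` remaining arguments, in
increasing order of position, as the free variables. -/
def Psi2 {n : ℕ} (i j : Fin (n + 2)) (x y : ℝ) (f : (Fin (n + 2) → ℝ) → ℝ)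
    (z : Fin n → ℝ) : ℝ :=
  f (i.insertNth x ((auxIdx i j).insertNth y z))

/-- The first variational derivative `g_μ(x) = ∑_i ⟨Ψ_i(x) f, μ^{m-1}⟩` of
`F_{m,f}(ν) = ⟨f, ν^m⟩`, for `m = n+2`. -/
noncomputable def gVar (n : ℕ) (μ : Measure ℝ) (f : (Fin (n + 2) → ℝ) → ℝ) (x : ℝ) : ℝ :=
  ∑ i : Fin (n + 2), ∫ z, f (i.insertNth x z) ∂(Measure.pi fun _ : Fin (n + 1) => μ)

/-- The second variational derivative `h_μ(x,y) = ∑_{i≠j} ⟨Ψ_{i,j}(x,y) f, μ^{m-2}⟩` of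
`F_{m,f}(ν) = ⟨f, ν^m⟩`, for `m = n+2`. -/
noncomputable def hVar (n : ℕ) (μ : Measure ℝ) (f : (Fin (n + 2) → ℝ) → ℝ) (x y : ℝ) : ℝ :=
  ∑ i : Fin (n + 2), ∑ j : Fin (n + 2),
    if i ≠ j then ∫ z, Psi2 i j x y f z ∂(Measure.pi fun _ : Fin n => μ) else 0

/-- The second partial derivative `f''_{ij}` of `f : ℝ^m → ℝ` with respect to its `i`-th
and `j`-th variables. -/
noncomputable def pd2 {m : ℕ} (f : (Fin m → ℝ) → ℝ) (i j : Fin m) (x : Fin m → ℝ) : ℝ :=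
  fderiv ℝ (fun w => fderiv ℝ f w (Pi.single j (1 : ℝ))) x (Pi.single i (1 : ℝ))

/-!
Placing a variable `x` in the `i`-th coordinate is a measure-preserving rearrangement
`ℝ × ℝ^(m-1) ≃ ℝ^m`, and placing a pair `(x, y)` in the coordinates `i ≠ j` is a measure-preserving
rearrangement `ℝ² × ℝ^(m-2) ≃ ℝ^m`. Differentiating under the integral sign in a placed variable
produces the partial derivative of `f` in that coordinate, so `g_μ''` and `∂²h_μ/∂x∂y` are sums of
partial integrals of `f''_{ii}` and `f''_{ij}`. The coefficients depend only on the placed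
variables, so Fubini's theorem moves them inside these integrals and turns each summand into an
integral over `ℝ^m`.
-/

section BoundedContDiff

variable {E F : Type*} [NormedAddCommGroup E] [NormedSpace ℝ E] [NormedAddCommGroup F]
  [NormedSpace ℝ F] {f : E → F} {N : ℕ}

/-- The class `C_b^N` of functions of class `C^N` which are bounded together with their derivatives
up to order `N`. -/
structure BoundedContDiff (N : ℕ) (f : E → F) : Prop where
  contDiff : ContDiff ℝ N f
  exists_bound : ∃ C, ∀ k : ℕ, k ≤ N → ∀ x, ‖iteratedFDeriv ℝ k f x‖ ≤ C

namespace BoundedContDiff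

theorem of_le {M : ℕ} (hf : BoundedContDiff N f) (h : M ≤ N) : BoundedContDiff M f where
  contDiff := hf.contDiff.of_le (by exact_mod_cast h)
  exists_bound := hf.exists_bound.imp fun _ hC k hk => hC k (hk.trans h)

theorem exists_norm_le (hf : BoundedContDiff N f) : ∃ C, ∀ x, ‖f x‖ ≤ C :=
  hf.exists_bound.imp fun _ hC x => by simpa using hC 0 N.zero_le x

theorem fderiv_apply (hf : BoundedContDiff (N + 1) f) (v : E) :
    BoundedContDiff N fun x => fderiv ℝ f x v := by
  have hdf : ContDiff ℝ N (fderiv ℝ f) := hf.contDiff.fderiv_right (by norm_cast)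
  obtain ⟨C, hC⟩ := hf.exists_bound
  refine ⟨hdf.clm_apply contDiff_const, ‖v‖ * C, fun k hk x => ?_⟩
  calc ‖iteratedFDeriv ℝ k (fun y => fderiv ℝ f y v) x‖
      ≤ ‖v‖ * ‖iteratedFDeriv ℝ k (fderiv ℝ f) x‖ :=
        norm_iteratedFDeriv_clm_apply_const hdf.contDiffAt (by exact_mod_cast hk)
    _ = ‖v‖ * ‖iteratedFDeriv ℝ (k + 1) f x‖ := by rw [norm_iteratedFDeriv_fderiv]
    _ ≤ ‖v‖ * C := by gcongr; exact hC (k + 1) (by lia) x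

theorem memLp_top [MeasurableSpace E] [OpensMeasurableSpace E] [SecondCountableTopologyEither E F]
    (hf : BoundedContDiff N f) (μ : Measure E) : MemLp f ⊤ μ := by
  obtain ⟨C, hC⟩ := hf.exists_norm_le
  exact memLp_top_of_bound hf.contDiff.continuous.aestronglyMeasurable C (.of_forall hC)

end BoundedContDiff

end BoundedContDiff

section PartialDeriv

variable {ι E : Type*} [DecidableEq ι] [NormedAddCommGroup E] [NormedSpace ℝ E]

/-- The partial derivative of `f` with respect to its `i`-th variable, so that
`pd2 f i j = partialDeriv (partialDeriv f j) i`. -/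
noncomputable def partialDeriv (f : (ι → ℝ) → E) (i : ι) (x : ι → ℝ) : E :=
  fderiv ℝ f x (Pi.single i 1)

variable {f : (ι → ℝ) → E}

theorem hasDerivAt_comp_update [Finite ι] {x : ι → ℝ} {i : ι} {t : ℝ}
    (hf : DifferentiableAt ℝ f (Function.update x i t)) :
    HasDerivAt (fun s => f (Function.update x i s))
      (partialDeriv f i (Function.update x i t)) t := by
  cases nonempty_fintype ι
  exact hf.hasFDerivAt.comp_hasDerivAt t (hasDerivAt_update x i t)

variable [Fintype ι]

theorem BoundedContDiff.partialDeriv {N : ℕ} (hf : BoundedContDiff (N + 1) f) (i : ι) :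
    BoundedContDiff N (partialDeriv f i) :=
  hf.fderiv_apply _

theorem hasDerivAt_integral_comp_update {α : Type*} [MeasurableSpace α] {ν : Measure α}
    [IsFiniteMeasure ν] {φ : α → ι → ℝ} (hφ : AEStronglyMeasurable φ ν)
    (hf : BoundedContDiff 1 f) (i : ι) (t : ℝ) :
    HasDerivAt (fun s => ∫ z, f (Function.update (φ z) i s) ∂ν)
      (∫ z, partialDeriv f i (Function.update (φ z) i t) ∂ν) t := by
  have hf' : BoundedContDiff 0 (partialDeriv f i) := hf.partialDeriv i
  have aesm_comp {g : (ι → ℝ) → E} (hg : Continuous g) (s : ℝ) :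
      AEStronglyMeasurable (fun z => g (Function.update (φ z) i s)) ν :=
    (hg.comp (continuous_id.update i continuous_const)).comp_aestronglyMeasurable hφ
  obtain ⟨C, hC⟩ := hf.exists_norm_le
  obtain ⟨C', hC'⟩ := hf'.exists_norm_le
  refine (hasDerivAt_integral_of_dominated_loc_of_deriv_le univ_mem
    (.of_forall (aesm_comp hf.contDiff.continuous))
    (.of_bound (aesm_comp hf.contDiff.continuous t) C (.of_forall fun z => hC _))
    (aesm_comp hf'.contDiff.continuous t)
    (.of_forall fun z s _ => hC' _) (integrable_const C')
    (.of_forall fun z s _ => hasDerivAt_comp_update ?_)).2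
  exact hf.contDiff.differentiable one_ne_zero _

end PartialDeriv

section Fubini

variable {β γ X : Type*} [MeasurableSpace β] [MeasurableSpace γ] [MeasurableSpace X]
  {ν : Measure β} {τ : Measure γ} {ξ : Measure X} [IsFiniteMeasure τ]

section

variable {e : β × γ ≃ᵐ X} {π : X → β} {κ : β → ℝ} {G : X → ℝ}

theorem integrable_fst_mul_comp (he : MeasurePreserving e (ν.prod τ) ξ) (hκ : Integrable κ ν)
    (hG : MemLp G ⊤ ξ) : Integrable (fun q => κ q.1 * G (e q)) (ν.prod τ) :=
  (hκ.comp_fst τ).mul_of_top_left (hG.comp_measurePreserving he)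

theorem integrable_mul_integral_comp (he : MeasurePreserving e (ν.prod τ) ξ)
    (hκ : Integrable κ ν) (hG : MemLp G ⊤ ξ) :
    Integrable (fun b => κ b * ∫ z, G (e (b, z)) ∂τ) ν := by
  simpa only [integral_const_mul] using (integrable_fst_mul_comp he hκ hG).integral_prod_left

theorem integrable_comp_mul (he : MeasurePreserving e (ν.prod τ) ξ) (hπ : ∀ q, π (e q) = q.1)
    (hκ : Integrable κ ν) (hG : MemLp G ⊤ ξ) : Integrable (fun w => κ (π w) * G w) ξ := by
  rw [← he.integrable_comp_emb e.measurableEmbedding]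
  simpa only [Function.comp_def, hπ] using integrable_fst_mul_comp he hκ hG

theorem integral_mul_integral_comp [SFinite ν] (he : MeasurePreserving e (ν.prod τ) ξ)
    (hπ : ∀ q, π (e q) = q.1) (hκ : Integrable κ ν) (hG : MemLp G ⊤ ξ) :
    ∫ b, κ b * ∫ z, G (e (b, z)) ∂τ ∂ν = ∫ w, κ (π w) * G w ∂ξ := by
  calc ∫ b, κ b * ∫ z, G (e (b, z)) ∂τ ∂ν = ∫ b, ∫ z, κ b * G (e (b, z)) ∂τ ∂ν := by
        simp only [integral_const_mul]
    _ = ∫ q, κ q.1 * G (e q) ∂ν.prod τ := (integral_prod _ (integrable_fst_mul_comp he hκ hG)).symm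
    _ = ∫ w, κ (π w) * G w ∂ξ := by
        simpa only [hπ] using he.integral_comp' fun w => κ (π w) * G w

end

section

variable {ι : Type*} {s : Finset ι} {e : ι → β × γ ≃ᵐ X} {π : ι → X → β} {κ : β → ℝ}
  {G : ι → X → ℝ}

theorem integrable_mul_sum_integral_comp (he : ∀ i ∈ s, MeasurePreserving (e i) (ν.prod τ) ξ)
    (hκ : Integrable κ ν) (hG : ∀ i ∈ s, MemLp (G i) ⊤ ξ) :
    Integrable (fun b => κ b * ∑ i ∈ s, ∫ z, G i (e i (b, z)) ∂τ) ν := by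
  simp only [Finset.mul_sum]
  exact integrable_finsetSum _ fun i hi => integrable_mul_integral_comp (he i hi) hκ (hG i hi)

theorem integrable_sum_comp_mul (he : ∀ i ∈ s, MeasurePreserving (e i) (ν.prod τ) ξ)
    (hπ : ∀ i ∈ s, ∀ q, π i (e i q) = q.1) (hκ : Integrable κ ν)
    (hG : ∀ i ∈ s, MemLp (G i) ⊤ ξ) : Integrable (fun w => ∑ i ∈ s, κ (π i w) * G i w) ξ :=
  integrable_finsetSum _ fun i hi => integrable_comp_mul (he i hi) (hπ i hi) hκ (hG i hi)

theorem integral_mul_sum_integral_comp [SFinite ν]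
    (he : ∀ i ∈ s, MeasurePreserving (e i) (ν.prod τ) ξ) (hπ : ∀ i ∈ s, ∀ q, π i (e i q) = q.1)
    (hκ : Integrable κ ν) (hG : ∀ i ∈ s, MemLp (G i) ⊤ ξ) :
    ∫ b, κ b * ∑ i ∈ s, ∫ z, G i (e i (b, z)) ∂τ ∂ν = ∫ w, ∑ i ∈ s, κ (π i w) * G i w ∂ξ := by
  simp only [Finset.mul_sum]
  rw [integral_finsetSum _ fun i hi => integrable_mul_integral_comp (he i hi) hκ (hG i hi),
    integral_finsetSum _ fun i hi => integrable_comp_mul (he i hi) (hπ i hi) hκ (hG i hi)]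
  exact Finset.sum_congr rfl fun i hi => integral_mul_integral_comp (he i hi) (hπ i hi) hκ (hG i hi)

end

end Fubini

theorem sum_sum_ite_ne {ι M : Type*} [Fintype ι] [DecidableEq ι] [AddCommMonoid M]
    (F : ι → ι → M) :
    ∑ i, ∑ j, (if i ≠ j then F i j else 0) = ∑ p ∈ Finset.univ.offDiag, F p.1 p.2 := by
  rw [← Fintype.sum_prod_type', ← Finset.sum_filter]
  congr 1
  ext p
  simp

section Insertion

variable {n : ℕ}

theorem succAbove_auxIdx {i j : Fin (n + 2)} (h : i ≠ j) : i.succAbove (auxIdx i j) = j := by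
  have : (i : ℕ) ≠ j := Fin.val_ne_of_ne h
  unfold auxIdx
  split_ifs with hji
  · exact Fin.succAbove_of_castSucc_lt _ _ hji
  · rw [Fin.succAbove_of_le_castSucc _ _ (by simp only [Fin.le_def, Fin.val_castSucc]; lia)]
    ext
    simp only [Fin.val_succ]
    lia

variable {α : Type*} [MeasurableSpace α]

/-- The rearrangement `((x, y), z) ↦ i.insertNth x ((auxIdx i j).insertNth y z)` at which `Psi2`
evaluates its function. For `i ≠ j` it places `x` in the `i`-th and `y` in the `j`-th coordinate. -/
def insertPair (i j : Fin (n + 2)) : (α × α) × (Fin n → α) ≃ᵐ (Fin (n + 2) → α) :=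
  MeasurableEquiv.prodAssoc.trans <|
    ((MeasurableEquiv.refl α).prodCongr
      (MeasurableEquiv.piFinSuccAbove (fun _ => α) (auxIdx i j)).symm).trans
    (MeasurableEquiv.piFinSuccAbove (fun _ => α) i).symm

theorem measurePreserving_insertPair (μ : Measure α) [SigmaFinite μ] (i j : Fin (n + 2)) :
    MeasurePreserving (insertPair i j) ((μ.prod μ).prod (Measure.pi fun _ : Fin n => μ))
      (Measure.pi fun _ : Fin (n + 2) => μ) :=
  (measurePreserving_piFinSuccAbove (fun _ => μ) i).symm.comp <|
    ((MeasurePreserving.id μ).prod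
      (measurePreserving_piFinSuccAbove (fun _ => μ) (auxIdx i j)).symm).comp
    (measurePreserving_prodAssoc μ μ _)

theorem update_insertPair_left (i j : Fin (n + 2)) (x x' y : α) (z : Fin n → α) :
    Function.update (insertPair i j ((x, y), z)) i x' = insertPair i j ((x', y), z) :=
  Fin.update_insertNth ..

theorem update_insertPair_right {i j : Fin (n + 2)} (h : i ≠ j) (x y y' : α) (z : Fin n → α) :
    Function.update (insertPair i j ((x, y), z)) j y' = insertPair i j ((x, y'), z) := by
  have hupdate := Fin.insertNth_update (α := fun _ => α) i x (auxIdx i j) y'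
    ((auxIdx i j).insertNth y z)
  rw [Fin.update_insertNth, succAbove_auxIdx h] at hupdate
  exact hupdate.symm

theorem insertPair_coordinates {i j : Fin (n + 2)} (h : i ≠ j) (q : (α × α) × (Fin n → α)) :
    (insertPair i j q i, insertPair i j q j) = q.1 := by
  obtain ⟨⟨x, y⟩, z⟩ := q
  refine Prod.ext ?_ ?_
  · simpa using congrFun (update_insertPair_left i j x x y z).symm i
  · simpa using congrFun (update_insertPair_right h x y y z).symm j

end Insertion

section VariationalDerivatives

variable {n : ℕ} {μ : Measure ℝ} {f : (Fin (n + 2) → ℝ) → ℝ}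

theorem BoundedContDiff.pd2 (hf : BoundedContDiff 2 f) (i j : Fin (n + 2)) :
    BoundedContDiff 0 (pd2 f i j) :=
  (hf.partialDeriv j).partialDeriv i

theorem hVar_eq_sum_offDiag (x y : ℝ) : hVar n μ f x y = ∑ p ∈ Finset.univ.offDiag,
    ∫ z, f (insertPair p.1 p.2 ((x, y), z)) ∂(Measure.pi fun _ : Fin n => μ) :=
  sum_sum_ite_ne _

variable [IsFiniteMeasure μ]

theorem hasDerivAt_integral_insertNth {k : ℕ} {f : (Fin (k + 1) → ℝ) → ℝ}
    (hf : BoundedContDiff 1 f) (i : Fin (k + 1)) (x : ℝ) :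
    HasDerivAt (fun x => ∫ z, f (i.insertNth x z) ∂(Measure.pi fun _ : Fin k => μ))
      (∫ z, partialDeriv f i (i.insertNth x z) ∂(Measure.pi fun _ : Fin k => μ)) x := by
  have hφ : Continuous fun z : Fin k → ℝ => (i.insertNth 0 z : Fin (k + 1) → ℝ) := by fun_prop
  simpa only [Fin.update_insertNth] using
    hasDerivAt_integral_comp_update hφ.aestronglyMeasurable hf i x

theorem hasDerivAt_integral_insertPair_left (hf : BoundedContDiff 1 f) (i j : Fin (n + 2))
    (x y : ℝ) :
    HasDerivAt (fun x => ∫ z, f (insertPair i j ((x, y), z)) ∂(Measure.pi fun _ : Fin n => μ))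
      (∫ z, partialDeriv f i (insertPair i j ((x, y), z)) ∂(Measure.pi fun _ : Fin n => μ)) x := by
  have hφ : Measurable fun z : Fin n → ℝ => insertPair i j (((0 : ℝ), y), z) := by fun_prop
  simpa only [update_insertPair_left] using
    hasDerivAt_integral_comp_update hφ.aestronglyMeasurable hf i x

theorem hasDerivAt_integral_insertPair_right (hf : BoundedContDiff 1 f) {i j : Fin (n + 2)}
    (h : i ≠ j) (x y : ℝ) :
    HasDerivAt (fun y => ∫ z, f (insertPair i j ((x, y), z)) ∂(Measure.pi fun _ : Fin n => μ))
      (∫ z, partialDeriv f j (insertPair i j ((x, y), z)) ∂(Measure.pi fun _ : Fin n => μ)) y := by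
  have hφ : Measurable fun z : Fin n → ℝ => insertPair i j ((x, (0 : ℝ)), z) := by fun_prop
  simpa only [update_insertPair_right h] using
    hasDerivAt_integral_comp_update hφ.aestronglyMeasurable hf j y

theorem hasDerivAt_gVar (hf : BoundedContDiff 1 f) (x : ℝ) :
    HasDerivAt (gVar n μ f) (∑ i : Fin (n + 2),
      ∫ z, partialDeriv f i (i.insertNth x z) ∂(Measure.pi fun _ : Fin (n + 1) => μ)) x :=
  .fun_sum fun i _ => hasDerivAt_integral_insertNth hf i x

theorem hasDerivAt_deriv_gVar (hf : BoundedContDiff 2 f) (x : ℝ) :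
    HasDerivAt (deriv (gVar n μ f)) (∑ i : Fin (n + 2),
      ∫ z, pd2 f i i (i.insertNth x z) ∂(Measure.pi fun _ : Fin (n + 1) => μ)) x := by
  rw [funext fun x => (hasDerivAt_gVar (μ := μ) (hf.of_le one_le_two) x).deriv]
  exact .fun_sum fun i _ => hasDerivAt_integral_insertNth (hf.partialDeriv i) i x

theorem hasDerivAt_hVar_right (hf : BoundedContDiff 1 f) (x y : ℝ) :
    HasDerivAt (fun y => hVar n μ f x y) (∑ p ∈ Finset.univ.offDiag,
      ∫ z, partialDeriv f p.2 (insertPair p.1 p.2 ((x, y), z))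
        ∂(Measure.pi fun _ : Fin n => μ)) y := by
  simp only [hVar_eq_sum_offDiag]
  exact .fun_sum fun p hp =>
    hasDerivAt_integral_insertPair_right hf (Finset.mem_offDiag.1 hp).2.2 x y

theorem hasDerivAt_deriv_hVar_right (hf : BoundedContDiff 2 f) (x y : ℝ) :
    HasDerivAt (fun x => deriv (fun y => hVar n μ f x y) y) (∑ p ∈ Finset.univ.offDiag,
      ∫ z, pd2 f p.1 p.2 (insertPair p.1 p.2 ((x, y), z)) ∂(Measure.pi fun _ : Fin n => μ)) x := by
  simp only [fun x => (hasDerivAt_hVar_right (μ := μ) (hf.of_le one_le_two) x y).deriv]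
  exact .fun_sum fun p _ => hasDerivAt_integral_insertPair_left (hf.partialDeriv p.2) p.1 p.2 x y

variable {a : ℝ → ℝ} {b : ℝ → ℝ → ℝ}

theorem integrable_sum_mul_pd2_self (ha : Integrable a μ) (hf : BoundedContDiff 2 f) :
    Integrable (fun z => ∑ i : Fin (n + 2), a (z i) * pd2 f i i z)
      (Measure.pi fun _ : Fin (n + 2) => μ) :=
  integrable_sum_comp_mul (π := fun i z => z i)
    (fun i _ => (measurePreserving_piFinSuccAbove (fun _ => μ) i).symm)
    (fun i _ q => Fin.insertNth_apply_same (α := fun _ => ℝ) i q.1 q.2) ha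
    (fun i _ => (hf.pd2 i i).memLp_top _)

theorem integral_mul_deriv_deriv_gVar (ha : Integrable a μ) (hf : BoundedContDiff 2 f) :
    ∫ x, a x * deriv (deriv (gVar n μ f)) x ∂μ =
      ∫ z, ∑ i : Fin (n + 2), a (z i) * pd2 f i i z ∂(Measure.pi fun _ : Fin (n + 2) => μ) := by
  simp only [(hasDerivAt_deriv_gVar hf _).deriv]
  exact integral_mul_sum_integral_comp (π := fun i z => z i)
    (fun i _ => (measurePreserving_piFinSuccAbove (fun _ => μ) i).symm)
    (fun i _ q => Fin.insertNth_apply_same (α := fun _ => ℝ) i q.1 q.2) ha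
    (fun i _ => (hf.pd2 i i).memLp_top _)

theorem integrable_sum_mul_pd2_offDiag (hb : Integrable (Function.uncurry b) (μ.prod μ))
    (hf : BoundedContDiff 2 f) :
    Integrable (fun z => ∑ p ∈ Finset.univ.offDiag, b (z p.1) (z p.2) * pd2 f p.1 p.2 z)
      (Measure.pi fun _ : Fin (n + 2) => μ) :=
  integrable_sum_comp_mul (π := fun p z => (z p.1, z p.2))
    (fun p _ => measurePreserving_insertPair μ p.1 p.2)
    (fun _ hp => insertPair_coordinates (Finset.mem_offDiag.1 hp).2.2) hb
    (fun p _ => (hf.pd2 p.1 p.2).memLp_top _)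

theorem integral_integral_mul_deriv_deriv_hVar
    (hb : Integrable (Function.uncurry b) (μ.prod μ)) (hf : BoundedContDiff 2 f) :
    ∫ x, ∫ y, b x y * deriv (fun x => deriv (fun y => hVar n μ f x y) y) x ∂μ ∂μ =
      ∫ z, ∑ p ∈ Finset.univ.offDiag, b (z p.1) (z p.2) * pd2 f p.1 p.2 z
        ∂(Measure.pi fun _ : Fin (n + 2) => μ) := by
  have he : ∀ p ∈ (Finset.univ : Finset (Fin (n + 2))).offDiag, MeasurePreserving
      (insertPair p.1 p.2) ((μ.prod μ).prod (Measure.pi fun _ : Fin n => μ))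
      (Measure.pi fun _ => μ) := fun p _ => measurePreserving_insertPair μ p.1 p.2
  have hG : ∀ p ∈ (Finset.univ : Finset (Fin (n + 2))).offDiag,
      MemLp (pd2 f p.1 p.2) ⊤ (Measure.pi fun _ => μ) := fun p _ => (hf.pd2 p.1 p.2).memLp_top _
  simp only [(hasDerivAt_deriv_hVar_right hf _ _).deriv]
  refine (integral_prod _ (integrable_mul_sum_integral_comp he hb hG)).symm.trans ?_
  exact integral_mul_sum_integral_comp (π := fun p z => (z p.1, z p.2)) he
    (fun _ hp => insertPair_coordinates (Finset.mem_offDiag.1 hp).2.2) hb hG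

end VariationalDerivatives

theorem statement3_general (n : ℕ) (μ : Measure ℝ) [IsFiniteMeasure μ] {a : ℝ → ℝ}
    {b : ℝ → ℝ → ℝ} (ha : Integrable a μ) (hb : Integrable (Function.uncurry b) (μ.prod μ))
    {f : (Fin (n + 2) → ℝ) → ℝ} (hf : BoundedContDiff 2 f) :
    (∀ x, DifferentiableAt ℝ (gVar n μ f) x) ∧
    (∀ x, DifferentiableAt ℝ (deriv (gVar n μ f)) x) ∧
    (∀ x y, DifferentiableAt ℝ (fun y' => hVar n μ f x y') y) ∧
    (∀ x y, DifferentiableAt ℝ (fun x' => deriv (fun y' => hVar n μ f x' y') y) x) ∧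
    ((1 / 2) * (∫ x, a x * deriv (deriv (gVar n μ f)) x ∂μ)
      + (1 / 2) * (∫ x, ∫ y,
          b x y * deriv (fun x' => deriv (fun y' => hVar n μ f x' y') y) x ∂μ ∂μ)
      = ∫ z, ((1 / 2) * ∑ i : Fin (n + 2), a (z i) * pd2 f i i z
          + (1 / 2) * ∑ i : Fin (n + 2), ∑ j : Fin (n + 2),
              if i ≠ j then b (z i) (z j) * pd2 f i j z else 0)
          ∂(Measure.pi fun _ : Fin (n + 2) => μ)) := by
  have hf₁ : BoundedContDiff 1 f := hf.of_le one_le_two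
  refine ⟨fun x => (hasDerivAt_gVar hf₁ x).differentiableAt,
    fun x => (hasDerivAt_deriv_gVar hf x).differentiableAt,
    fun x y => (hasDerivAt_hVar_right hf₁ x y).differentiableAt,
    fun x y => (hasDerivAt_deriv_hVar_right hf x y).differentiableAt, ?_⟩
  simp only [fun z : Fin (n + 2) → ℝ => sum_sum_ite_ne fun i j => b (z i) (z j) * pd2 f i j z]
  rw [integral_mul_deriv_deriv_gVar ha hf, integral_integral_mul_deriv_deriv_hVar hb hf,
    integral_add ((integrable_sum_mul_pd2_self ha hf).const_mul _)
      ((integrable_sum_mul_pd2_offDiag hb hf).const_mul _),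
    integral_const_mul, integral_const_mul]

/-- for `m = n+2 ≥ 2`, a finite `μ`, bounded Borel `a, ρ` and a `C²` function
`f : ℝ^m → ℝ` bounded together with its partial derivatives up to order two, the
variational derivatives `g_μ`, `h_μ` are (twice, resp. mixed-second-order) differentiable
and `𝒜 F_{m,f}(μ) = ⟨G^m f, μ^m⟩`. -/
theorem statement3 (n : ℕ) (μ : Measure ℝ) [IsFiniteMeasure μ]
    (a ρ : ℝ → ℝ) (ham : Measurable a) (Ca : ℝ) (hab : ∀ x, |a x| ≤ Ca)
    (hρm : Measurable ρ) (Cρ : ℝ) (hρb : ∀ x, |ρ x| ≤ Cρ)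
    (f : (Fin (n + 2) → ℝ) → ℝ) (hf : ContDiff ℝ 2 f)
    (C : ℝ) (hfb : ∀ k : ℕ, k ≤ 2 → ∀ z, ‖iteratedFDeriv ℝ k f z‖ ≤ C) :
    (∀ x, DifferentiableAt ℝ (gVar n μ f) x) ∧
    (∀ x, DifferentiableAt ℝ (deriv (gVar n μ f)) x) ∧
    (∀ x y, DifferentiableAt ℝ (fun y' => hVar n μ f x y') y) ∧
    (∀ x y, DifferentiableAt ℝ (fun x' => deriv (fun y' => hVar n μ f x' y') y) x) ∧
    ((1 / 2) * (∫ x, a x * deriv (deriv (gVar n μ f)) x ∂μ)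
      + (1 / 2) * (∫ x, ∫ y,
          ρ (x - y) * deriv (fun x' => deriv (fun y' => hVar n μ f x' y') y) x ∂μ ∂μ)
      = ∫ z, ((1 / 2) * ∑ i : Fin (n + 2), a (z i) * pd2 f i i z
          + (1 / 2) * ∑ i : Fin (n + 2), ∑ j : Fin (n + 2),
              if i ≠ j then ρ (z i - z j) * pd2 f i j z else 0)
          ∂(Measure.pi fun _ : Fin (n + 2) => μ)) := by
  have ha : Integrable a μ := .of_bound ham.aestronglyMeasurable Ca (.of_forall hab)
  have hρ : Integrable (fun p : ℝ × ℝ => ρ (p.1 - p.2)) (μ.prod μ) :=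
    .of_bound (hρm.comp measurable_sub).aestronglyMeasurable Cρ (.of_forall fun _ => hρb _)
  exact statement3_general n μ ha (b := fun x y => ρ (x - y)) hρ ⟨hf, C, hfb⟩
end

section
/- Let m, n ≥ 1, θ > 0, let c : ℝ → ℝ and ρ : ℝ → ℝ be functions, set a(x) := c(x)² + ρ(0), and let f : ℝⁿ → ℝ be twice continuously differentiable. Define H : ℝ^m → ℝ by H(x₁,…,x_m) = θ^{−n} Σ_{l₁,…,l_n=1}^m f(x_{l₁},…,x_{l_n}). Then for all (x₁,…,x_m) ∈ ℝ^m: (1/2)Σ_{i=1}^m a(x_i) ∂²H/∂x_i² + (1/2)Σ_{1≤i,j≤m, i≠j} ρ(x_i−x_j) ∂²H/∂x_i∂x_j = (1/(2θⁿ)) Σ_{α=1}^n Σ_{l₁,…,l_n=1}^m a(x_{l_α}) f''_{αα}(x_{l₁},…,x_{l_n}) + (1/(2θⁿ)) Σ_{1≤α,β≤n, α≠β} Σ_{l₁,…,l_n=1, l_α=l_β}^m c(x_{l_α}) c(x_{l_β}) f''_{αβ}(x_{l₁},…,x_{l_n}) + (1/(2θⁿ)) Σ_{1≤α,β≤n,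 α≠β} Σ_{l₁,…,l_n=1}^m ρ(x_{l_α}−x_{l_β}) f''_{αβ}(x_{l₁},…,x_{l_n}). -/
open MeasureTheory Filter Topology

/-- The pullback `H = F_{n,f} ∘ ζ` of `F_{n,f}(ν) = ⟨f, νⁿ⟩` under the empirical-measure
map `ζ(x₁,…,x_m) = θ⁻¹ ∑_i δ_{x_i}`:
`H(x₁,…,x_m) = θ^{-n} ∑_{l₁,…,l_n=1}^m f(x_{l₁},…,x_{l_n})`. -/
noncomputable def empPull (θ : ℝ) {n m : ℕ} (f : (Fin n → ℝ) → ℝ)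
    (x : Fin m → ℝ) : ℝ :=
  (1 / θ) ^ n * ∑ l : Fin n → Fin m, f (x ∘ l)

/-!
Let `H = empPull θ f` and let `D²` denote the second derivative as a bilinear form. Since
`x ↦ x ∘ l` is linear, `D²H(x)(u, v) = θ^{-n} ∑_l D²f(x ∘ l)(u ∘ l, v ∘ l)`. For a linear form `L`,
both `∑_i k_i L(e_i ∘ l)` and `∑_α k_{l α} L(e_α)` expand `L(k ∘ l)`; using this in each argument,
`∑_{i,j} K_{ij} ∂_i∂_j H(x) = θ^{-n} ∑_{α,β} ∑_l K_{l α, l β} f''_{αβ}(x ∘ l)` for every matrix `K`.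
The theorem is the case where `K` holds the coefficients of `G^m`.
-/

lemma sum_sum_eq_sum_diag_add_sum_ne {ι M : Type*} [Fintype ι] [DecidableEq ι] [AddCommMonoid M]
    (g : ι → ι → M) :
    ∑ i, ∑ j, g i j = ∑ i, g i i + ∑ i, ∑ j, if i ≠ j then g i j else 0 := by
  rw [← Finset.sum_add_distrib]
  refine Finset.sum_congr rfl fun i _ => ?_
  rw [← Finset.sum_filter, Finset.filter_ne, Finset.add_sum_erase _ _ (Finset.mem_univ i)]

section IndexMap

variable {ι κ R M : Type*} [Fintype ι] [DecidableEq ι] [Fintype κ] [DecidableEq κ]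
  [AddCommMonoid M]

lemma linearMap_apply_eq_sum_single [Semiring R] [Module R M] (L : (ι → R) →ₗ[R] M)
    (k : ι → R) : L k = ∑ i, k i • L (Pi.single i 1) := by
  conv_lhs => rw [pi_eq_sum_univ' k, map_sum]
  simp only [map_smul]

lemma sum_smul_apply_single_comp [Semiring R] [Module R M] (L : (κ → R) →ₗ[R] M) (l : κ → ι)
    (k : ι → R) :
    ∑ i, k i • L (Pi.single i 1 ∘ l) = ∑ α, k (l α) • L (Pi.single α 1) :=
  calc
    _ = L (k ∘ l) := (linearMap_apply_eq_sum_single (L ∘ₗ LinearMap.funLeft R R l) k).symm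
    _ = _ := linearMap_apply_eq_sum_single L (k ∘ l)

lemma sum_smul_apply_single_comp₂ [CommSemiring R] [Module R M]
    (B : (κ → R) →ₗ[R] (κ → R) →ₗ[R] M) (l : κ → ι) (K : ι → ι → R) :
    ∑ i, ∑ j, K i j • B (Pi.single i 1 ∘ l) (Pi.single j 1 ∘ l)
      = ∑ α, ∑ β, K (l α) (l β) • B (Pi.single α 1) (Pi.single β 1) :=
  calc
    _ = ∑ i, ∑ β, K i (l β) • B (Pi.single i 1 ∘ l) (Pi.single β 1) := by
      simp only [sum_smul_apply_single_comp (B _) l (K _)]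
    _ = ∑ β, ∑ i, K i (l β) • B.flip (Pi.single β 1) (Pi.single i 1 ∘ l) := Finset.sum_comm
    _ = ∑ β, ∑ α, K (l α) (l β) • B.flip (Pi.single β 1) (Pi.single α 1) := by
      simp only [sum_smul_apply_single_comp (B.flip _) l (K · (l _))]
    _ = _ := Finset.sum_comm

end IndexMap

section EmpiricalPullback

variable {m n : ℕ} {f : (Fin n → ℝ) → ℝ}

lemma pd2_eq_bilinearIteratedFDerivTwo (hf : ContDiff ℝ 2 f) (i j : Fin n) (x : Fin n → ℝ) :
    pd2 f i j x = bilinearIteratedFDerivTwo ℝ f x (Pi.single i 1) (Pi.single j 1) := by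
  have hdiff : Differentiable ℝ (fderiv ℝ f) :=
    (hf.fderiv_right (m := 1) le_rfl).differentiable one_ne_zero
  rw [pd2, fderiv_clm_apply (hdiff x) (differentiableAt_const _)]
  simp [bilinearIteratedFDerivTwo]

lemma contDiff_empPull (θ : ℝ) {k : WithTop ℕ∞} (hf : ContDiff ℝ k f) :
    ContDiff ℝ k (empPull θ f : (Fin m → ℝ) → ℝ) := by
  unfold empPull
  fun_prop

lemma iteratedFDeriv_empPull (θ : ℝ) {k : ℕ} (hf : ContDiff ℝ k f) (x : Fin m → ℝ)
    (v : Fin k → Fin m → ℝ) :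
    iteratedFDeriv ℝ k (empPull θ f) x v
      = (1 / θ) ^ n * ∑ l : Fin n → Fin m, iteratedFDeriv ℝ k f (x ∘ l) (fun r => v r ∘ l) := by
  let relabel (l : Fin n → Fin m) := Pi.compRightL ℝ (fun _ : Fin m => ℝ) l
  have hterm (l : Fin n → Fin m) : ContDiff ℝ k (f ∘ relabel l) := hf.comp (relabel l).contDiff
  have hsum : empPull θ f = fun y => (1 / θ) ^ n • ∑ l, (f ∘ relabel l) y := rfl
  rw [hsum, iteratedFDeriv_const_smul_apply' (ContDiff.sum fun l _ => hterm l).contDiffAt,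
    iteratedFDeriv_fun_sum_apply fun l _ => (hterm l).contDiffAt]
  simp only [(relabel _).iteratedFDeriv_comp_right hf x le_rfl,
    smul_apply, sum_apply, smul_eq_mul]
  rfl

lemma pd2_empPull (θ : ℝ) (hf : ContDiff ℝ 2 f) (i j : Fin m) (x : Fin m → ℝ) :
    pd2 (empPull θ f) i j x = (1 / θ) ^ n * ∑ l : Fin n → Fin m,
      bilinearIteratedFDerivTwo ℝ f (x ∘ l) (Pi.single i 1 ∘ l) (Pi.single j 1 ∘ l) := by
  rw [pd2_eq_bilinearIteratedFDerivTwo (contDiff_empPull θ hf),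
    bilinearIteratedFDerivTwo_eq_iteratedFDeriv, iteratedFDeriv_empPull θ hf]
  simp [bilinearIteratedFDerivTwo, iteratedFDeriv_two_apply]

lemma sum_mul_pd2_empPull (θ : ℝ) (hf : ContDiff ℝ 2 f) (K : Fin m → Fin m → ℝ)
    (x : Fin m → ℝ) :
    ∑ i, ∑ j, K i j * pd2 (empPull θ f) i j x
      = (1 / θ) ^ n * ∑ α, ∑ β, ∑ l : Fin n → Fin m, K (l α) (l β) * pd2 f α β (x ∘ l) := by
  let D (l : Fin n → Fin m) := bilinearIteratedFDerivTwo ℝ f (x ∘ l)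
  calc
    _ = (1 / θ) ^ n * ∑ i, ∑ j, ∑ l, K i j * D l (Pi.single i 1 ∘ l) (Pi.single j 1 ∘ l) := by
      simp only [pd2_empPull θ hf, mul_left_comm, Finset.mul_sum, D]
    _ = (1 / θ) ^ n * ∑ l, ∑ i, ∑ j, K i j * D l (Pi.single i 1 ∘ l) (Pi.single j 1 ∘ l) := by
      simp only [Finset.sum_comm (t := (Finset.univ : Finset (Fin n → Fin m)))]
    _ = (1 / θ) ^ n * ∑ l, ∑ α, ∑ β, K (l α) (l β) * pd2 f α β (x ∘ l) := by
      simp only [pd2_eq_bilinearIteratedFDerivTwo hf, ← smul_eq_mul (a := K _ _),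
        sum_smul_apply_single_comp₂, D]
    _ = _ := by
      simp only [Finset.sum_comm (s := (Finset.univ : Finset (Fin n → Fin m)))]

end EmpiricalPullback

section DiffusionCoeff

variable {ι : Type*} [DecidableEq ι]

/-- The second-order coefficients of `G^m` at the configuration `x`, so that
`G^m = (1/2) ∑_{i,j} diffusionCoeff c ρ x i j ∂²/∂x_i∂x_j`: the `c`-term comes from noise acting on
each particle independently, hence is diagonal, and the `ρ`-term from noise common to all
particles. -/
def diffusionCoeff (c ρ : ℝ → ℝ) (x : ι → ℝ) (i j : ι) : ℝ :=
  (if i = j then c (x i) * c (x j) else 0) + ρ (x i - x j)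

@[simp]
lemma diffusionCoeff_self (c ρ : ℝ → ℝ) (x : ι → ℝ) (i : ι) :
    diffusionCoeff c ρ x i i = c (x i) ^ 2 + ρ 0 := by
  simp [diffusionCoeff, sq]

lemma diffusionCoeff_of_ne (c ρ : ℝ → ℝ) (x : ι → ℝ) {i j : ι} (h : i ≠ j) :
    diffusionCoeff c ρ x i j = ρ (x i - x j) := by
  simp [diffusionCoeff, h]

lemma sum_diffusionCoeff_mul [Fintype ι] (c ρ : ℝ → ℝ) (x : ι → ℝ) (P : ι → ι → ℝ) :
    ∑ i, ∑ j, diffusionCoeff c ρ x i j * P i j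
      = ∑ i, (c (x i) ^ 2 + ρ 0) * P i i
        + ∑ i, ∑ j, if i ≠ j then ρ (x i - x j) * P i j else 0 := by
  rw [sum_sum_eq_sum_diag_add_sum_ne]
  simp +contextual only [diffusionCoeff_self, diffusionCoeff_of_ne, ne_eq, not_false_eq_true]

/- Distinct variables `α ≠ β` of `f` may be carried by the same particle `l α = l β`; this is the
source of the middle sum. -/
lemma sum_diffusionCoeff_comp_mul {κ : Type*} [Fintype ι] [Fintype κ] [DecidableEq κ]
    (c ρ : ℝ → ℝ) (x : ι → ℝ) (P : κ → κ → (κ → ι) → ℝ) :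
    ∑ α, ∑ β, ∑ l : κ → ι, diffusionCoeff c ρ x (l α) (l β) * P α β l
      = ∑ α, ∑ l : κ → ι, (c (x (l α)) ^ 2 + ρ 0) * P α α l
        + ∑ α, ∑ β, (if α ≠ β then
            ∑ l ∈ Finset.univ.filter (fun l : κ → ι => l α = l β),
              c (x (l α)) * c (x (l β)) * P α β l
          else 0)
        + ∑ α, ∑ β, if α ≠ β then ∑ l : κ → ι, ρ (x (l α) - x (l β)) * P α β l else 0 := by
  have hsplit (α β : κ) : ∑ l : κ → ι, diffusionCoeff c ρ x (l α) (l β) * P α β l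
      = ∑ l ∈ Finset.univ.filter (fun l : κ → ι => l α = l β), c (x (l α)) * c (x (l β)) * P α β l
        + ∑ l : κ → ι, ρ (x (l α) - x (l β)) * P α β l := by
    simp only [diffusionCoeff, add_mul, ite_mul, zero_mul, Finset.sum_add_distrib,
      Finset.sum_filter]
  rw [sum_sum_eq_sum_diag_add_sum_ne, add_assoc]
  simp only [diffusionCoeff_self, hsplit, ite_add_zero, Finset.sum_add_distrib]

end DiffusionCoeff

/-- Lemma 3.2: `G^m (F_{n,f} ∘ ζ)` equals the stated three-term sum, where
`G^m = (1/2)∑_i a(x_i)∂²/∂x_i² + (1/2)∑_{i≠j} ρ(x_i−x_j)∂²/∂x_i∂x_j` and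
`a(x) = c(x)² + ρ(0)`. -/
theorem statement5 (m n : ℕ) (hm : 1 ≤ m) (hn : 1 ≤ n) (θ : ℝ) (hθ : 0 < θ)
    (c ρ : ℝ → ℝ) (f : (Fin n → ℝ) → ℝ) (hf : ContDiff ℝ 2 f) (x : Fin m → ℝ) :
    (1 / 2) * (∑ i : Fin m, (c (x i) ^ 2 + ρ 0) * pd2 (empPull θ f) i i x)
      + (1 / 2) * (∑ i : Fin m, ∑ j : Fin m,
          if i ≠ j then ρ (x i - x j) * pd2 (empPull θ f) i j x else 0)
    = (1 / (2 * θ ^ n)) * (∑ α : Fin n, ∑ l : Fin n → Fin m,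
          (c (x (l α)) ^ 2 + ρ 0) * pd2 f α α (x ∘ l))
      + (1 / (2 * θ ^ n)) * (∑ α : Fin n, ∑ β : Fin n,
          if α ≠ β then
            ∑ l ∈ Finset.univ.filter (fun l : Fin n → Fin m => l α = l β),
              c (x (l α)) * c (x (l β)) * pd2 f α β (x ∘ l)
          else 0)
      + (1 / (2 * θ ^ n)) * (∑ α : Fin n, ∑ β : Fin n,
          if α ≠ β then
            ∑ l : Fin n → Fin m, ρ (x (l α) - x (l β)) * pd2 f α β (x ∘ l)
          else 0) := by
  have hscale : (1 / 2) * (1 / θ) ^ n = 1 / (2 * θ ^ n) := by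
    rw [one_div_pow, one_div_mul_one_div]
  rw [← mul_add, ← mul_add, ← mul_add,
    ← sum_diffusionCoeff_mul c ρ x fun i j => pd2 (empPull θ f) i j x,
    ← sum_diffusionCoeff_comp_mul c ρ x fun α β l => pd2 f α β (x ∘ l),
    sum_mul_pd2_empPull θ hf, ← mul_assoc, hscale]
end

section
/- Let h : ℝ → ℝ be Borel measurable and square-integrable with respect to Lebesgue measure, and define ρ(x) := ∫_ℝ h(y−x)h(y) dy. Let μ be a finite Borel measure on ℝ and let ψ : ℝ → ℝ be bounded and Borel measurable. Then z ↦ (∫_ℝ h(z−x)ψ(x) μ(dx))² is integrable over ℝ and ∫_ℝ (∫_ℝ h(z−x)ψ(x) μ(dx))² dz = ∫_ℝ ∫_ℝ ρ(x−y) ψ(x) ψ(y) μ(dx) μ(dy). -/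
open MeasureTheory Filter Topology

/-! The square of the integral is a double integral over `μ ⊗ μ`. By Hölder, each product of
translates `z ↦ h (z - x) * h (z - y)` has `L¹` norm at most `‖h‖₂²`, uniformly in `(x, y)`, so
Fubini applies and `z` may be integrated first; by translation invariance that inner integral is
`ρ (x - y)`. -/

variable {𝕜 : Type*} [RCLike 𝕜]

section Fubini

variable {α β γ : Type*} [MeasurableSpace α] [MeasurableSpace β] [MeasurableSpace γ]
  {μ : Measure α} {μ' : Measure β} {ν : Measure γ} [SFinite μ] [SFinite μ'] [SFinite ν]

theorem integrable_integral_mul_integral (F : α → γ → 𝕜) (K : β → γ → 𝕜)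
    (hFK : Integrable (fun q : (α × β) × γ => F q.1.1 q.2 * K q.1.2 q.2) ((μ.prod μ').prod ν)) :
    Integrable (fun z => (∫ x, F x z ∂μ) * ∫ y, K y z ∂μ') ν :=
  hFK.integral_prod_right.congr (.of_forall fun z => integral_prod_mul (F · z) (K · z))

theorem integral_integral_mul_integral (F : α → γ → 𝕜) (K : β → γ → 𝕜)
    (hFK : Integrable (fun q : (α × β) × γ => F q.1.1 q.2 * K q.1.2 q.2) ((μ.prod μ').prod ν)) :
    ∫ z, (∫ x, F x z ∂μ) * (∫ y, K y z ∂μ') ∂ν = ∫ x, ∫ y, ∫ z, F x z * K y z ∂ν ∂μ' ∂μ :=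
  calc
    _ = ∫ z, ∫ p : α × β, F p.1 z * K p.2 z ∂(μ.prod μ') ∂ν :=
      integral_congr_ae (.of_forall fun z => (integral_prod_mul (F · z) (K · z)).symm)
    _ = ∫ p : α × β, ∫ z, F p.1 z * K p.2 z ∂ν ∂(μ.prod μ') :=
      (integral_integral_swap hFK).symm
    _ = _ := integral_prod _ hFK.integral_prod_left

end Fubini

theorem integral_norm_mul_le_eLpNorm_mul_eLpNorm {α R : Type*} [MeasurableSpace α] [NormedRing R]
    {ν : Measure α} {p q : ENNReal} [p.HolderConjugate q] {f g : α → R}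
    (hf : MemLp f p ν) (hg : MemLp g q ν) :
    ∫ z, ‖f z * g z‖ ∂ν ≤ (eLpNorm f p ν * eLpNorm g q ν).toReal := by
  have h_holder : eLpNorm (fun z => f z * g z) 1 ν ≤ eLpNorm f p ν * eLpNorm g q ν := by
    simpa using eLpNorm_le_eLpNorm_mul_eLpNorm'_of_norm hf.1 hg.1 (· * ·) 1
      (.of_forall fun z => by simpa using norm_mul_le (f z) (g z))
  rw [integral_norm_eq_lintegral_enorm (f := fun z => f z * g z) (hf.1.mul hg.1),
    ← eLpNorm_one_eq_lintegral_enorm]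
  exact ENNReal.toReal_mono (ENNReal.mul_ne_top hf.2.ne hg.2.ne) h_holder

section Translates

variable {G : Type*} [AddGroup G] [MeasurableSpace G] [MeasurableAdd G] {ν : Measure G}
  [ν.IsAddRightInvariant] {p q : ENNReal}

theorem memLp_comp_sub_right {E : Type*} [NormedAddCommGroup E] {f : G → E} (hf : MemLp f p ν)
    (x : G) : MemLp (fun z => f (z - x)) p ν :=
  hf.comp_measurePreserving (measurePreserving_sub_right ν x)

theorem integrable_comp_sub_mul_comp_sub {R : Type*} [NormedRing R] [p.HolderConjugate q]
    {f g : G → R} (hf : MemLp f p ν) (hg : MemLp g q ν) (x y : G) :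
    Integrable (fun z => f (z - x) * g (z - y)) ν :=
  (memLp_comp_sub_right hf x).integrable_mul (memLp_comp_sub_right hg y)

theorem integral_norm_comp_sub_mul_comp_sub_le {R : Type*} [NormedRing R] [p.HolderConjugate q]
    {f g : G → R} (hf : MemLp f p ν) (hg : MemLp g q ν) (x y : G) :
    ∫ z, ‖f (z - x) * g (z - y)‖ ∂ν ≤ (eLpNorm f p ν * eLpNorm g q ν).toReal := by
  rw [← eLpNorm_comp_measurePreserving hf.1 (measurePreserving_sub_right ν x),
    ← eLpNorm_comp_measurePreserving hg.1 (measurePreserving_sub_right ν y)]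
  exact integral_norm_mul_le_eLpNorm_mul_eLpNorm (memLp_comp_sub_right hf x)
    (memLp_comp_sub_right hg y)

theorem quasiMeasurePreserving_snd_sub_comp_fst [MeasurableSub₂ G] [SFinite ν] {α : Type*}
    [MeasurableSpace α] {μ : Measure α} {u : α → G} (hu : Measurable u) :
    Measure.QuasiMeasurePreserving (fun r : α × G => r.2 - u r.1) (μ.prod ν) ν :=
  QuasiMeasurePreserving.prod_of_right (by fun_prop)
    (.of_forall fun a => (measurePreserving_sub_right ν (u a)).quasiMeasurePreserving)

end Translates

/-- The cross-correlation of `f` and `g` with respect to `ν`, without complex conjugation. For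
`f = g = h` it is the covariance kernel of `h`. -/
noncomputable def crossCorrelation {G : Type*} [Sub G] [MeasurableSpace G] (f g : G → 𝕜)
    (ν : Measure G) (x : G) : 𝕜 :=
  ∫ y, f (y - x) * g y ∂ν

section CrossCorrelation

variable {G : Type*} [AddGroup G] [MeasurableSpace G] {ν : Measure G} [ν.IsAddRightInvariant]

theorem integral_comp_sub_mul_comp_sub [MeasurableAdd G] (f g : G → 𝕜) (x y : G) :
    ∫ z, f (z - x) * g (z - y) ∂ν = crossCorrelation f g ν (x - y) := by
  simpa only [sub_sub_sub_cancel_right, crossCorrelation] using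
    integral_sub_right_eq_self (fun w => f (w - (x - y)) * g w) y

variable [MeasurableAdd₂ G] [MeasurableNeg G] [SFinite ν] {p q : ENNReal} [p.HolderConjugate q]
  {f g φ ψ : G → 𝕜} {μ μ' : Measure G}

theorem integrable_weighted_comp_sub_mul_comp_sub (hf : MemLp f p ν) (hg : MemLp g q ν)
    (hφ : Integrable φ μ) (hψ : Integrable ψ μ') :
    Integrable (fun r : (G × G) × G => f (r.2 - r.1.1) * φ r.1.1 * (g (r.2 - r.1.2) * ψ r.1.2))
      ((μ.prod μ').prod ν) := by
  have hf_meas : AEStronglyMeasurable (fun r : (G × G) × G => f (r.2 - r.1.1))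
      ((μ.prod μ').prod ν) :=
    hf.1.comp_quasiMeasurePreserving (quasiMeasurePreserving_snd_sub_comp_fst measurable_fst)
  have hg_meas : AEStronglyMeasurable (fun r : (G × G) × G => g (r.2 - r.1.2))
      ((μ.prod μ').prod ν) :=
    hg.1.comp_quasiMeasurePreserving (quasiMeasurePreserving_snd_sub_comp_fst measurable_snd)
  have h_weights : Integrable (fun s : G × G => φ s.1 * ψ s.2) (μ.prod μ') := hφ.mul_prod hψ
  simp only [mul_mul_mul_comm (f _) (φ _)]
  have h_meas : AEStronglyMeasurable (fun r : (G × G) × G =>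
      f (r.2 - r.1.1) * g (r.2 - r.1.2) * (φ r.1.1 * ψ r.1.2)) ((μ.prod μ').prod ν) :=
    (hf_meas.mul hg_meas).mul h_weights.1.comp_fst
  refine (integrable_prod_iff h_meas).2 ⟨.of_forall fun s => ?_, ?_⟩
  · exact (integrable_comp_sub_mul_comp_sub hf hg s.1 s.2).mul_const (φ s.1 * ψ s.2)
  · refine (h_weights.norm.const_mul (eLpNorm f p ν * eLpNorm g q ν).toReal).mono'
      h_meas.norm.integral_prod_right' (.of_forall fun s => ?_)
    rw [Real.norm_of_nonneg (integral_nonneg fun _ => norm_nonneg _)]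
    simp only [norm_mul _ (φ _ * ψ _), integral_mul_const]
    gcongr
    exact integral_norm_comp_sub_mul_comp_sub_le hf hg s.1 s.2

theorem statement8_general [SFinite μ] [SFinite μ'] (hf : MemLp f p ν)
    (hg : MemLp g q ν) (hφ : Integrable φ μ) (hψ : Integrable ψ μ') :
    Integrable (fun z => (∫ x, f (z - x) * φ x ∂μ) * ∫ y, g (z - y) * ψ y ∂μ') ν ∧
    ∫ z, (∫ x, f (z - x) * φ x ∂μ) * (∫ y, g (z - y) * ψ y ∂μ') ∂ν =
      ∫ x, ∫ y, crossCorrelation f g ν (x - y) * φ x * ψ y ∂μ' ∂μ := by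
  have h_joint := integrable_weighted_comp_sub_mul_comp_sub hf hg hφ hψ
  let F x z := f (z - x) * φ x
  let K y z := g (z - y) * ψ y
  refine ⟨integrable_integral_mul_integral F K h_joint, ?_⟩
  rw [integral_integral_mul_integral F K h_joint]
  simp only [F, K, mul_mul_mul_comm (f _) (φ _), integral_mul_const,
    integral_comp_sub_mul_comp_sub]
  simp only [mul_assoc]

end CrossCorrelation

/-- for a Borel, square-integrable `h : ℝ → ℝ` with covariance kernel
`ρ(x) = ∫ h(y−x) h(y) dy`, a finite Borel measure `μ` on `ℝ` and a bounded Borel `ψ`,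
the function `z ↦ (∫ h(z−x) ψ(x) μ(dx))²` is integrable on `ℝ` and
`∫ (∫ h(z−x) ψ(x) μ(dx))² dz = ∫∫ ρ(x−y) ψ(x) ψ(y) μ(dx) μ(dy)`. -/
theorem statement8 (h : ℝ → ℝ) (hhm : Measurable h) (hh2 : MemLp h 2 volume)
    (ρ : ℝ → ℝ) (hρ : ∀ x, ρ x = ∫ y, h (y - x) * h y)
    (μ : Measure ℝ) [IsFiniteMeasure μ]
    (ψ : ℝ → ℝ) (hψm : Measurable ψ) (C : ℝ) (hψb : ∀ x, |ψ x| ≤ C) :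
    Integrable (fun z => (∫ x, h (z - x) * ψ x ∂μ) ^ 2) volume ∧
    ∫ z, (∫ x, h (z - x) * ψ x ∂μ) ^ 2 = ∫ x, ∫ y, ρ (x - y) * ψ x * ψ y ∂μ ∂μ := by
  obtain rfl : ρ = crossCorrelation h h volume := funext hρ
  have hψ : Integrable ψ μ := .of_bound hψm.aestronglyMeasurable C (.of_forall hψb)
  simpa only [sq] using statement8_general hh2 hh2 hψ hψ
end

section
/- Let ζ be a Borel measure on ℝ and let b > 0 and l > 0 be constants such that ζ([x, x+l]) ≤ b·l for every x ∈ ℝ. Then for every t > 0 and every x ∈ ℝ, ∫_ℝ (2πt)^{−1/2} exp(−(x−y)²/(2t)) ζ(dy) ≤ b (2l + √(2πt)) / √(2πt). -/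
open MeasureTheory Filter Topology Real

/-! A superlevel set of a unimodal function on the line is an interval. If `ζ` gives mass at most
`c * l` to intervals of length `l`, then covering an interval `s` by adjacent translates of
`[0, l)` costs at most one translate too many, so `ζ s ≤ c * (volume s + l)`. Integrating over the
levels, the volumes add up to the Lebesgue integral of the function, and the excess `c * l` is
counted once for every level below its maximum. For a Gaussian density of variance `t` the integral
is `1` and the maximum is `1 / √(2πt)`; bounding each half-line separately would double the excess
and give the constant `2 * l`. -/

open ProbabilityTheory
open scoped ENNReal NNReal

theorem measure_Ico_add_nsmul_le {G : Type*} [AddMonoid G] [LinearOrder G] [MeasurableSpace G]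
    {ζ : Measure G} {l : G} {m : ℝ≥0∞} (hζ : ∀ x, ζ (Set.Ico x (x + l)) ≤ m) (a : G) (n : ℕ) :
    ζ (Set.Ico a (a + n • l)) ≤ n * m := by
  induction n with
  | zero => simp
  | succ n ih =>
    calc ζ (Set.Ico a (a + (n + 1) • l))
        ≤ ζ (Set.Ico a (a + n • l) ∪ Set.Ico (a + n • l) (a + n • l + l)) := by
          rw [succ_nsmul, ← add_assoc]
          exact measure_mono Set.Ico_subset_Ico_union_Ico
      _ ≤ n * m + m := (measure_union_le _ _).trans (add_le_add ih (hζ _))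
      _ = (n + 1 : ℕ) * m := by push_cast; ring

theorem ordConnected_setOf_le_of_quasiconcaveOn {β : Type*} [LE β] {f : ℝ → β}
    (hf : QuasiconcaveOn ℝ Set.univ f) (r : β) : {y | r ≤ f y}.OrdConnected := by
  simpa only [Set.mem_univ, true_and] using (hf r).ordConnected

theorem measurable_of_quasiconcaveOn {β : Type*} [LinearOrder β] [TopologicalSpace β]
    [OrderTopology β] [SecondCountableTopology β] [MeasurableSpace β] [BorelSpace β] {f : ℝ → β}
    (hf : QuasiconcaveOn ℝ Set.univ f) : Measurable f :=
  measurable_of_Ici fun r => (ordConnected_setOf_le_of_quasiconcaveOn hf r).measurableSet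

section UniformIntervalBound

variable {ζ : Measure ℝ} {l : ℝ} {c : ℝ≥0∞}

theorem measure_Icc_le_mul_length_add (hl : 0 < l)
    (hζ : ∀ x, ζ (Set.Ico x (x + l)) ≤ c * ENNReal.ofReal l) {a b : ℝ} (hab : a ≤ b) :
    ζ (Set.Icc a b) ≤ c * ENNReal.ofReal (b - a + l) := by
  set n := ⌊(b - a) / l⌋₊
  have lt_length : b - a < (n + 1) * l := (div_lt_iff₀ hl).1 (Nat.lt_floor_add_one _)
  have length_le : n * l ≤ b - a :=
    (le_div_iff₀ hl).1 (Nat.floor_le (div_nonneg (sub_nonneg.2 hab) hl.le))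
  have subset_Ico : Set.Icc a b ⊆ Set.Ico a (a + (n + 1) • l) := by
    refine Set.Icc_subset_Ico_right ?_
    rw [nsmul_eq_mul]
    push_cast
    linarith
  calc ζ (Set.Icc a b)
      ≤ (n + 1 : ℕ) * (c * ENNReal.ofReal l) :=
        (measure_mono subset_Ico).trans (measure_Ico_add_nsmul_le hζ a (n + 1))
    _ = c * ENNReal.ofReal ((n + 1 : ℕ) * l) := by
        rw [ENNReal.ofReal_mul (Nat.cast_nonneg _), ENNReal.ofReal_natCast]
        ring
    _ ≤ c * ENNReal.ofReal (b - a + l) := by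
        gcongr
        push_cast
        linarith

theorem measure_le_mul_volume_add_of_ordConnected_of_isBounded (hl : 0 < l)
    (hζ : ∀ x, ζ (Set.Ico x (x + l)) ≤ c * ENNReal.ofReal l) {s : Set ℝ} (hs : s.OrdConnected)
    (hbdd : Bornology.IsBounded s) :
    ζ s ≤ c * (volume s + ENNReal.ofReal l) := by
  rcases s.eq_empty_or_nonempty with rfl | hne
  · simp
  have length_le_volume : ENNReal.ofReal (sSup s - sInf s) ≤ volume s := by
    rw [← Real.volume_Ioo]
    exact measure_mono <| IsConnected.Ioo_csInf_csSup_subset ⟨hne, hs.isPreconnected⟩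
      hbdd.bddBelow hbdd.bddAbove
  have sInf_le_sSup : sInf s ≤ sSup s := csInf_le_csSup hne hbdd.bddBelow hbdd.bddAbove
  calc ζ s
      ≤ ζ (Set.Icc (sInf s) (sSup s)) :=
        measure_mono (subset_Icc_csInf_csSup hbdd.bddBelow hbdd.bddAbove)
    _ ≤ c * ENNReal.ofReal (sSup s - sInf s + l) := measure_Icc_le_mul_length_add hl hζ sInf_le_sSup
    _ = c * (ENNReal.ofReal (sSup s - sInf s) + ENNReal.ofReal l) := by
        rw [ENNReal.ofReal_add (sub_nonneg.2 sInf_le_sSup) hl.le]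
    _ ≤ c * (volume s + ENNReal.ofReal l) := by gcongr

theorem measure_le_mul_volume_add_of_ordConnected (hl : 0 < l)
    (hζ : ∀ x, ζ (Set.Ico x (x + l)) ≤ c * ENNReal.ofReal l) {s : Set ℝ} (hs : s.OrdConnected) :
    ζ s ≤ c * (volume s + ENNReal.ofReal l) := by
  have exhaustion : s = ⋃ n : ℕ, s ∩ Metric.closedBall 0 n := by
    rw [← Set.inter_iUnion, Metric.iUnion_closedBall_nat, Set.inter_univ]
  have monotone_inter : Monotone fun n : ℕ => s ∩ Metric.closedBall (0 : ℝ) n := fun m n hmn =>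
    Set.inter_subset_inter_right s (Metric.closedBall_subset_closedBall (Nat.cast_le.2 hmn))
  calc ζ s = ⨆ n : ℕ, ζ (s ∩ Metric.closedBall 0 n) := by
        rw [← monotone_inter.measure_iUnion, ← exhaustion]
    _ ≤ c * (volume s + ENNReal.ofReal l) := iSup_le fun n => by
        have ordConnected_inter : (s ∩ Metric.closedBall (0 : ℝ) n).OrdConnected :=
          hs.inter (convex_closedBall 0 _).ordConnected
        refine (measure_le_mul_volume_add_of_ordConnected_of_isBounded hl hζ ordConnected_inter
          (Metric.isBounded_closedBall.subset Set.inter_subset_right)).trans ?_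
        gcongr
        exact Set.inter_subset_left

theorem measure_setOf_le_le_mul_volume_add_indicator {β : Type*} [Preorder β] (hl : 0 < l)
    (hζ : ∀ x, ζ (Set.Ico x (x + l)) ≤ c * ENNReal.ofReal l) {f : ℝ → β} {M : β}
    (hf : QuasiconcaveOn ℝ Set.univ f) (f_le : ∀ y, f y ≤ M) (r : β) :
    ζ {y | r ≤ f y} ≤
      c * (volume {y | r ≤ f y} + (Set.Iic M).indicator (fun _ => ENNReal.ofReal l) r) := by
  by_cases hr : r ≤ M
  · rw [Set.indicator_of_mem (Set.mem_Iic.2 hr)]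
    exact measure_le_mul_volume_add_of_ordConnected hl hζ
      (ordConnected_setOf_le_of_quasiconcaveOn hf r)
  · have level_empty : {y | r ≤ f y} = ∅ :=
      Set.eq_empty_of_forall_notMem fun y hy => hr (hy.trans (f_le y))
    simp [level_empty]

theorem lintegral_ofReal_le_mul_add_of_quasiconcaveOn (hl : 0 < l)
    (hζ : ∀ x, ζ (Set.Ico x (x + l)) ≤ c * ENNReal.ofReal l) {f : ℝ → ℝ} {M : ℝ}
    (hf : QuasiconcaveOn ℝ Set.univ f) (f_nonneg : ∀ y, 0 ≤ f y) (f_le : ∀ y, f y ≤ M) :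
    ∫⁻ y, ENNReal.ofReal (f y) ∂ζ ≤
      c * ((∫⁻ y, ENNReal.ofReal (f y)) + ENNReal.ofReal l * ENNReal.ofReal M) := by
  have f_measurable := measurable_of_quasiconcaveOn hf
  have layer_cake (μ : Measure ℝ) :
      ∫⁻ y, ENNReal.ofReal (f y) ∂μ = ∫⁻ r in Set.Ioi 0, μ {y | r ≤ f y} :=
    lintegral_eq_lintegral_meas_le μ (ae_of_all _ f_nonneg) f_measurable.aemeasurable
  have volume_level_measurable : Measurable fun r => volume {y | r ≤ f y} :=
    Antitone.measurable fun r r' hrr' => measure_mono fun y hy => hrr'.trans hy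
  have excess_measurable : Measurable ((Set.Iic M).indicator fun _ => ENNReal.ofReal l) :=
    measurable_const.indicator measurableSet_Iic
  calc ∫⁻ y, ENNReal.ofReal (f y) ∂ζ
      ≤ ∫⁻ r in Set.Ioi 0,
          c * (volume {y | r ≤ f y} + (Set.Iic M).indicator (fun _ => ENNReal.ofReal l) r) :=
        (layer_cake ζ).trans_le <| lintegral_mono <|
          measure_setOf_le_le_mul_volume_add_indicator hl hζ hf f_le
    _ = c * ((∫⁻ y, ENNReal.ofReal (f y)) +
          ∫⁻ r in Set.Ioi 0, (Set.Iic M).indicator (fun _ => ENNReal.ofReal l) r) := by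
        rw [lintegral_const_mul _ (by fun_prop),
          lintegral_add_right _ excess_measurable, ← layer_cake]
    _ = c * ((∫⁻ y, ENNReal.ofReal (f y)) + ENNReal.ofReal l * ENNReal.ofReal M) := by
        rw [lintegral_indicator_const measurableSet_Iic, Measure.restrict_apply measurableSet_Iic,
          Set.inter_comm, Set.Ioi_inter_Iic, Real.volume_Ioc, sub_zero]

end UniformIntervalBound

theorem quasiconcaveOn_gaussianPDFReal (μ : ℝ) (v : ℝ≥0) :
    QuasiconcaveOn ℝ Set.univ (gaussianPDFReal μ v) := by
  have sq_convex : ConvexOn ℝ Set.univ fun y : ℝ => (y - μ) ^ 2 := by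
    simpa only [Function.comp_def, Set.preimage_univ, ← sub_eq_add_neg] using
      (even_two.convexOn_pow (𝕜 := ℝ)).translate_left (-μ)
  have scaling_monotone : Monotone fun u : ℝ => (√(2 * π * v))⁻¹ * rexp (u / (2 * v)) := by
    intro u u' huu'
    dsimp only
    gcongr
  exact (sq_convex.neg.quasiconcaveOn.monotone_comp scaling_monotone :)

theorem gaussianPDFReal_le_inv_sqrt (μ : ℝ) (v : ℝ≥0) (y : ℝ) :
    gaussianPDFReal μ v y ≤ (√(2 * π * v))⁻¹ := by
  have exponent_nonpos : -(y - μ) ^ 2 / (2 * v) ≤ 0 :=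
    div_nonpos_of_nonpos_of_nonneg (neg_nonpos.2 (sq_nonneg _)) (by positivity)
  exact mul_le_of_le_one_right (by positivity) (Real.exp_le_one_iff.2 exponent_nonpos)

theorem lintegral_gaussianPDFReal_le_mul {ζ : Measure ℝ} {l : ℝ} {c : ℝ≥0∞} (hl : 0 < l)
    (hζ : ∀ x, ζ (Set.Ico x (x + l)) ≤ c * ENNReal.ofReal l) (μ : ℝ) {v : ℝ≥0} (hv : v ≠ 0) :
    ∫⁻ y, ENNReal.ofReal (gaussianPDFReal μ v y) ∂ζ ≤
      c * ENNReal.ofReal (1 + l / √(2 * π * v)) := by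
  refine (lintegral_ofReal_le_mul_add_of_quasiconcaveOn hl hζ (quasiconcaveOn_gaussianPDFReal μ v)
    (gaussianPDFReal_nonneg μ v) (gaussianPDFReal_le_inv_sqrt μ v)).trans_eq ?_
  rw [lintegral_gaussianPDFReal_eq_one μ hv, ← ENNReal.ofReal_mul hl.le, ← ENNReal.ofReal_one,
    ← ENNReal.ofReal_add zero_le_one (by positivity), div_eq_mul_inv]

theorem statement10_general (ζ : Measure ℝ) (b l : ℝ) (hl : 0 < l)
    (hζ : ∀ x : ℝ, ζ (Set.Ico x (x + l)) ≤ ENNReal.ofReal (b * l))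
    (t : ℝ) (ht : 0 < t) (x : ℝ) :
    (∫⁻ y, ENNReal.ofReal (Real.exp (-(x - y) ^ 2 / (2 * t)) / Real.sqrt (2 * π * t)) ∂ζ)
      ≤ ENNReal.ofReal (b * (l + Real.sqrt (2 * π * t)) / Real.sqrt (2 * π * t)) := by
  lift t to ℝ≥0 using ht.le
  have density_eq (y : ℝ) :
      rexp (-(x - y) ^ 2 / (2 * t)) / √(2 * π * t) = gaussianPDFReal x t y := by
    rw [gaussianPDFReal, sub_sq_comm, div_eq_inv_mul]
  simp only [density_eq]
  calc ∫⁻ y, ENNReal.ofReal (gaussianPDFReal x t y) ∂ζ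
      ≤ ENNReal.ofReal b * ENNReal.ofReal (1 + l / √(2 * π * t)) :=
        lintegral_gaussianPDFReal_le_mul hl (fun a => (hζ a).trans_eq (ENNReal.ofReal_mul' hl.le)) x
          (NNReal.coe_pos.1 ht).ne'
    _ = ENNReal.ofReal (b * (l + √(2 * π * t)) / √(2 * π * t)) := by
        rw [← ENNReal.ofReal_mul' (by positivity)]
        congr 1
        field_simp
        ring

/-- Lemma 7.1 for the Gaussian kernel: if a Borel measure `ζ` on `ℝ`
satisfies `ζ([x, x+l]) ≤ b·l` for all `x`, then for every `t > 0` and `x ∈ ℝ`,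
`∫ g_t(x,y) ζ(dy) ≤ b(2l + √(2πt))/√(2πt)`, where `g_t` is the Brownian transition
density. -/
theorem statement10 (ζ : Measure ℝ) (b l : ℝ) (hb : 0 < b) (hl : 0 < l)
    (hζ : ∀ x : ℝ, ζ (Set.Icc x (x + l)) ≤ ENNReal.ofReal (b * l))
    (t : ℝ) (ht : 0 < t) (x : ℝ) :
    (∫⁻ y, ENNReal.ofReal (Real.exp (-(x - y) ^ 2 / (2 * t)) / Real.sqrt (2 * π * t)) ∂ζ)
      ≤ ENNReal.ofReal (b * (2 * l + Real.sqrt (2 * π * t)) / Real.sqrt (2 * π * t)) :=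
  (statement10_general ζ b l hl (fun a => (measure_mono Set.Ico_subset_Icc_self).trans (hζ a))
    t ht x).trans (ENNReal.ofReal_le_ofReal (by gcongr; linarith))
end
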